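/- Let n ≥ 1, let θ be a bounded measurable function supported in Q = (-1/2,1/2)^n with ∫θ = 1, and let (λ_j)_{j ∈ ℤ^n} be nonnegative real numbers with ∑_{j ∈ ℤ^n} λ_j < ∞. If g = ∑_{j ∈ ℤ^n} λ_j (χ_{Q_j} − θ) belongs to H^1(ℝ^n) (i.e., 𝓜_φ g is integrable for every smooth φ supported in the closed unit ball with ∫φ = 1), then ∑_{j ∈ ℤ^n} λ_j (1 + ln₊|j|) < ∞. -/

import Mathlib

open MeasureTheory Real Set Metric ENNReal

noncomputable section

/-- `ℝ^n` with the Euclidean norm. -/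
abbrev En (n : ℕ) := EuclideanSpace ℝ (Fin n)

/-- `ln₊ t = max (ln t) 0`. -/
def lnp (t : ℝ) : ℝ := max (Real.log t) 0

/-- The unit cube `Q = (-1/2, 1/2)^n`. -/
def unitQ (n : ℕ) : Set (En n) := {x | ∀ i, -(1/2 : ℝ) < x i ∧ x i < 1/2}

/-- The dilate `φ_t(y) = t^{-n} φ(y/t)` convolved with `f` at `x`:
`(φ_t ∗ f)(x) = ∫ t^{-n} φ((x-y)/t) f(y) dy`. -/
def phiConv (n : ℕ) (φ f : En n → ℝ) (t : ℝ) (x : En n) : ℝ :=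
  ∫ y, (t ^ n)⁻¹ * φ (t⁻¹ • (x - y)) * f y

/-- The maximal function `𝓜_φ f(x) = sup_{t>0} |(φ_t ∗ f)(x)|`. -/
def Mphi (n : ℕ) (φ f : En n → ℝ) (x : En n) : ℝ :=
  ⨆ t : {t : ℝ // 0 < t}, |phiConv n φ f t.1 x|

/-- A smooth function supported in the closed unit ball with integral `1`. -/
def IsTestFun (n : ℕ) (φ : En n → ℝ) : Prop :=
  ContDiff ℝ (⊤ : ℕ∞) φ ∧ (∀ x, x ∉ Metric.closedBall (0 : En n) 1 → φ x = 0) ∧ (∫ x, φ x) = 1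

/-- Membership in the Hardy space `H^1(ℝ^n)`: the maximal function `𝓜_φ f` is
integrable for every admissible `φ`. -/
def MemH1 (n : ℕ) (f : En n → ℝ) : Prop :=
  ∀ φ : En n → ℝ, IsTestFun n φ → Integrable (Mphi n φ f)

/-- The cube `Q_k = k + Q` for `k ∈ ℤ^n`. -/
def Qk (n : ℕ) (k : Fin n → ℤ) : Set (En n) :=
  {x | ∀ i, (k i : ℝ) - 1/2 < x i ∧ x i < (k i : ℝ) + 1/2}

/-- The lattice point `k ∈ ℤ^n` viewed as a point of `ℝ^n`. -/
def zv (n : ℕ) (k : Fin n → ℤ) : En n :=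
  (EuclideanSpace.equiv (Fin n) ℝ).symm (fun i => (k i : ℝ))

/-- `μ_k = ‖f_k‖_{L^1} = ∫_{Q_k} |f|`. -/
def muk (n : ℕ) (f : En n → ℝ) (k : Fin n → ℤ) : ℝ := ∫ x in Qk n k, |f x|

/-- The local Hardy–Littlewood maximal function
`M^loc f(x) = sup_{0<r<1} r^{-n} ∫_{|y-x|<r} |f(y)| dy`. -/
def Mloc (n : ℕ) (f : En n → ℝ) (x : En n) : ℝ :=
  ⨆ r : Set.Ioo (0 : ℝ) 1, ((r : ℝ) ^ n)⁻¹ * ∫ y in Metric.ball x (r : ℝ), |f y|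

/-!
Test the maximal function with a bump that is constant, and maximal, on the ball of radius `1/2`.
At a point `x` outside a ball of radius `R` carrying `θ`, use the scale `4‖x‖`: there `θ` is seen at
the full height `c ‖x‖⁻ⁿ`, no cube is seen at more than this height, and the cubes with
`|j| ≥ 6‖x‖` are not seen at all. Hence all terms of `g` contribute with the same sign and
`𝓜_φ g(x) ≥ c ‖x‖⁻ⁿ ∑_{|j| ≥ 6‖x‖} λ_j`. Integrating in polar coordinates over `‖x‖ > R` gives
`∑_j λ_j ln₊(|j| / (6R)) < ∞`, and `ln₊|j| ≤ ln₊(6R) + ln₊(|j| / (6R))`.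

The supremum defining `𝓜_φ g` is taken in `ℝ`, where an unbounded supremum is `0`; it bounds each
`|φ_t ∗ g|` only where it is finite, which holds at every Lebesgue point of `|g|`.
-/

section Integration

lemma integrable_tsum_of_summable_integral_norm {α ι E : Type*} [Countable ι]
    {mα : MeasurableSpace α} {μ : Measure α} [NormedAddCommGroup E] [CompleteSpace E]
    {F : ι → α → E} (hF : ∀ i, Integrable (F i) μ)
    (hsum : Summable fun i => ∫ a, ‖F i a‖ ∂μ) :
    Integrable (fun a => ∑' i, F i a) μ := by
  refine ⟨.tsum fun i => (hF i).1, (lintegral_mono fun a => enorm_tsum_le_tsum_enorm).trans_lt ?_⟩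
  rw [lintegral_tsum fun i => (hF i).1.enorm]
  simp only [← ofReal_integral_norm_eq_lintegral_enorm (hF _)]
  exact hsum.tsum_ofReal_lt_top

variable {E : Type*} [NormedAddCommGroup E] [NormedSpace ℝ E] [FiniteDimensional ℝ E]
  [MeasurableSpace E] [BorelSpace E] (μ : Measure E) [μ.IsAddHaarMeasure] {a b : ℝ}

lemma integrableOn_inv_norm_pow_annulus (ha : 0 < a) (b : ℝ) (d : ℕ) :
    IntegrableOn (fun x : E => (‖x‖ ^ d)⁻¹) (closedBall 0 b \ closedBall 0 a) μ := by
  have hfin : μ (closedBall (0 : E) b \ closedBall 0 a) ≠ ∞ :=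
    ((measure_mono sdiff_subset).trans_lt measure_closedBall_lt_top).ne
  refine Measure.integrableOn_of_bounded (M := (a ^ d)⁻¹) hfin (by fun_prop) ?_
  refine ae_restrict_of_forall_mem (measurableSet_closedBall.diff measurableSet_closedBall) ?_
  intro x hx
  have hax : a < ‖x‖ := by simpa using hx.2
  rw [norm_inv, norm_pow, norm_norm]
  gcongr

lemma setIntegral_inv_norm_pow_finrank_annulus [Nontrivial E] (ha : 0 < a) (hb : 0 ≤ b) :
    ∫ x in closedBall (0 : E) b \ closedBall 0 a, (‖x‖ ^ Module.finrank ℝ E)⁻¹ ∂μ =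
      Module.finrank ℝ E * μ.real (ball 0 1) * log⁺ (b / a) := by
  set d := Module.finrank ℝ E
  have hannulus : closedBall (0 : E) b \ closedBall 0 a = norm ⁻¹' Ioc a b := by
    ext x
    simp [and_comm]
  have hradial (x : E) : (closedBall (0 : E) b \ closedBall 0 a).indicator
      (fun x => (‖x‖ ^ d)⁻¹) x = (Ioc a b).indicator (fun r => (r ^ d)⁻¹) ‖x‖ := by
    rw [hannulus]
    exact indicator_comp_right (g := fun r : ℝ => (r ^ d)⁻¹) norm
  have hjacobian (r : ℝ) : r ^ (d - 1) • (Ioc a b).indicator (fun r => (r ^ d)⁻¹) r =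
      (Ioc a b).indicator (fun r => r⁻¹) r := by
    rw [smul_eq_mul, ← indicator_mul_right _ (fun s : ℝ => s ^ (d - 1))]
    refine congrFun (indicator_congr fun s hs => ?_) r
    have hs0 : s ≠ 0 := (ha.trans hs.1).ne'
    rw [← pow_sub_one_mul Module.finrank_pos.ne' s, mul_inv,
      mul_inv_cancel_left₀ (pow_ne_zero _ hs0)]
  have hlog : ∫ r in Ioc a b, r⁻¹ = log⁺ (b / a) := by
    rcases le_total a b with h | h
    · rw [← intervalIntegral.integral_of_le h, integral_inv_of_pos ha (ha.trans_le h),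
        posLog_eq_log (le_abs.2 (.inl ((one_le_div ha).2 h)))]
    · rw [Ioc_eq_empty (not_lt.2 h), setIntegral_empty, eq_comm, posLog_eq_zero_iff,
        abs_of_nonneg (by positivity)]
      exact (div_le_one ha).2 h
  rw [← integral_indicator (measurableSet_closedBall.diff measurableSet_closedBall)]
  simp only [hradial, integral_fun_norm_addHaar μ, d, hjacobian]
  rw [setIntegral_indicator measurableSet_Ioc,
    inter_eq_right.2 fun r hr => mem_Ioi.2 (ha.trans hr.1), hlog, nsmul_eq_mul, smul_eq_mul,
    mul_assoc]

lemma inv_pow_finrank_mul_setIntegral_closedBall (f : E → ℝ) {t : ℝ} (ht : 0 < t) (x : E) :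
    (t ^ Module.finrank ℝ E)⁻¹ * ∫ y in closedBall x t, f y ∂μ =
      μ.real (ball 0 1) * ⨍ y in closedBall x t, f y ∂μ := by
  have hball : 0 < μ.real (ball (0 : E) 1) :=
    ENNReal.toReal_pos (measure_ball_pos _ _ one_pos).ne' measure_ball_lt_top.ne
  rw [setAverage_eq, Measure.addHaar_real_closedBall μ x ht.le, smul_eq_mul]
  field_simp

end Integration

section Convolution

variable {n : ℕ} {φ f : En n → ℝ} {C t : ℝ} {x : En n}

lemma integrable_kernel_mul (hφ : Continuous φ) (hC : ∀ y, |φ y| ≤ C) (hf : Integrable f)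
    (t : ℝ) (x : En n) : Integrable fun y => (t ^ n)⁻¹ * φ (t⁻¹ • (x - y)) * f y := by
  refine hf.bdd_mul (c := |(t ^ n)⁻¹| * C) (by fun_prop) (.of_forall fun y => ?_)
  rw [norm_mul, norm_eq_abs, norm_eq_abs]
  gcongr
  exact hC _

lemma phiConv_const_mul (a : ℝ) (f : En n → ℝ) :
    phiConv n φ (fun y => a * f y) t x = a * phiConv n φ f t x := by
  simp only [phiConv, mul_left_comm _ a, integral_const_mul]

lemma phiConv_sub {g : En n → ℝ} (hφ : Continuous φ) (hC : ∀ y, |φ y| ≤ C) (hf : Integrable f)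
    (hg : Integrable g) :
    phiConv n φ (fun y => f y - g y) t x = phiConv n φ f t x - phiConv n φ g t x := by
  simp only [phiConv, mul_sub]
  exact integral_sub (integrable_kernel_mul hφ hC hf t x) (integrable_kernel_mul hφ hC hg t x)

lemma hasSum_phiConv {ι : Type*} [Countable ι] {u : ι → En n → ℝ} (hφ : Continuous φ)
    (hC : ∀ y, |φ y| ≤ C) (hu : ∀ i, Integrable (u i))
    (hsum : Summable fun i => ∫ y, ‖u i y‖) :
    HasSum (fun i => phiConv n φ (u i) t x) (phiConv n φ (fun y => ∑' i, u i y) t x) := by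
  have hint := fun i => integrable_kernel_mul hφ hC (hu i) t x
  simp only [phiConv, ← tsum_mul_left]
  refine hasSum_integral_of_summable_integral_norm hint <|
    (hsum.mul_left (|(t ^ n)⁻¹| * C)).of_nonneg_of_le
      (fun i => integral_nonneg fun y => norm_nonneg _) fun i => ?_
  rw [← integral_const_mul]
  refine integral_mono (hint i).norm ((hu i).norm.const_mul _) fun y => ?_
  simp only [norm_mul, norm_eq_abs]
  gcongr
  exact hC _

lemma phiConv_le (hφ : Continuous φ) (hC : ∀ y, |φ y| ≤ C) (hf : Integrable f) (hf0 : 0 ≤ f)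
    (ht : 0 ≤ t) : phiConv n φ f t x ≤ (t ^ n)⁻¹ * C * ∫ y, f y := by
  rw [phiConv, ← integral_const_mul]
  refine integral_mono (integrable_kernel_mul hφ hC hf t x) (hf.const_mul _) fun y => ?_
  have hy := hf0 y
  dsimp only
  gcongr
  exact (le_abs_self _).trans (hC _)

lemma phiConv_eq_mul_integral {c : ℝ}
    (h : ∀ y ∈ Function.support f, φ (t⁻¹ • (x - y)) = c) :
    phiConv n φ f t x = (t ^ n)⁻¹ * c * ∫ y, f y := by
  rw [phiConv, ← integral_const_mul]
  congr 1 with y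
  by_cases hy : y ∈ Function.support f
  · rw [h y hy]
  · simp only [Function.notMem_support.1 hy, mul_zero]

lemma abs_phiConv_le_setIntegral (hC : ∀ y, |φ y| ≤ C) (hφ : ∀ y ∉ closedBall 0 1, φ y = 0)
    (hf : Integrable f) (ht : 0 < t) :
    |phiConv n φ f t x| ≤ C * ((t ^ n)⁻¹ * ∫ y in closedBall x t, |f y|) := by
  rw [phiConv, ← norm_eq_abs, ← integral_indicator measurableSet_closedBall, ← integral_const_mul,
    ← integral_const_mul]
  refine norm_integral_le_of_norm_le
    (((hf.abs.indicator measurableSet_closedBall).const_mul _).const_mul _) (.of_forall fun y => ?_)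
  rw [norm_mul, norm_mul, norm_inv, norm_pow, norm_of_nonneg ht.le, norm_eq_abs, norm_eq_abs]
  by_cases hy : y ∈ closedBall x t
  · rw [indicator_of_mem hy, mul_comm (_⁻¹), mul_assoc]
    gcongr
    exact hC _
  · have hout : t⁻¹ • (x - y) ∉ closedBall (0 : En n) 1 := by
      rw [mem_closedBall_zero_iff, norm_smul, norm_inv, norm_of_nonneg ht.le, ← dist_eq_norm,
        ← div_eq_inv_mul, div_le_one ht]
      rwa [mem_closedBall'] at hy
    simp [indicator_of_notMem hy, hφ _ hout]

end Convolution

section MaximalFunction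

variable {n : ℕ} {φ f : En n → ℝ}

lemma IsTestFun.exists_abs_le (hφ : IsTestFun n φ) : ∃ C, ∀ x, |φ x| ≤ C :=
  hφ.1.continuous.bounded_above_of_compact_support
    (.intro (isCompact_closedBall 0 1) fun x hx => hφ.2.1 x hx)

lemma Mphi_nonneg (φ f : En n → ℝ) (x : En n) : 0 ≤ Mphi n φ f x :=
  Real.iSup_nonneg fun _ => abs_nonneg _

/- Averages of `|f|` over small balls stay bounded at Lebesgue points, and averages over balls of
radius at least `δ` are bounded by `δ⁻ⁿ ‖f‖₁` up to a constant. -/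
lemma IsTestFun.ae_bddAbove_abs_phiConv (hφ : IsTestFun n φ) (hf : Integrable f) :
    ∀ᵐ x, BddAbove (range fun t : {t : ℝ // 0 < t} => |phiConv n φ f t x|) := by
  obtain ⟨C, hC⟩ := hφ.exists_abs_le
  have hC0 : 0 ≤ C := (abs_nonneg _).trans (hC 0)
  set V := volume.real (ball (0 : En n) 1)
  filter_upwards [IsUnifLocDoublingMeasure.ae_tendsto_average volume hf.abs.locallyIntegrable 1]
    with x hx
  have hlim := hx (l := nhdsWithin 0 (Ioi 0)) (fun _ => x) id Filter.tendsto_id <| by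
    filter_upwards [self_mem_nhdsWithin] with t ht
    simpa using (mem_Ioi.1 ht).le
  obtain ⟨δ, hδ, hsmall⟩ := mem_nhdsGT_iff_exists_Ioo_subset.1
    (hlim.eventually (gt_mem_nhds (lt_add_one |f x|)))
  refine ⟨max (C * (V * (|f x| + 1))) (C * ((δ ^ n)⁻¹ * ∫ y, |f y|)), ?_⟩
  rintro _ ⟨⟨t, ht⟩, rfl⟩
  refine (abs_phiConv_le_setIntegral hC hφ.2.1 hf ht).trans ?_
  rcases lt_or_ge t δ with htδ | hδt
  · refine le_max_of_le_left ?_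
    have hV := inv_pow_finrank_mul_setIntegral_closedBall volume (fun y => |f y|) ht x
    rw [finrank_euclideanSpace_fin] at hV
    rw [hV]
    gcongr
    exact (hsmall ⟨ht, htδ⟩).le
  · refine le_max_of_le_right ?_
    have hδ0 : 0 < δ := hδ
    have hmass : ∫ y in closedBall x t, |f y| ≤ ∫ y, |f y| :=
      setIntegral_le_integral hf.abs (.of_forall fun y => abs_nonneg (f y))
    gcongr

lemma IsTestFun.ae_abs_phiConv_le_Mphi (hφ : IsTestFun n φ) (hf : Integrable f) :
    ∀ᵐ x, ∀ t > 0, |phiConv n φ f t x| ≤ Mphi n φ f x := by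
  filter_upwards [hφ.ae_bddAbove_abs_phiConv hf] with x hx t ht
  exact le_ciSup hx ⟨t, ht⟩

end MaximalFunction

section Plateau

/-- A smooth bump equal to `1` on the ball of radius `1/2` and supported in the unit ball. -/
def plateauBump (n : ℕ) : ContDiffBump (0 : En n) := ⟨1 / 2, 1, by norm_num, by norm_num⟩

/-- The radial test function used to detect the lattice part: it attains its maximum on the whole
ball of radius `1/2`. -/
def plateau (n : ℕ) : En n → ℝ := (plateauBump n).normed volume

variable {n : ℕ}

lemma plateau_eq_zero {x : En n} (hx : 1 ≤ ‖x‖) : plateau n x = 0 := by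
  rw [plateau, ContDiffBump.normed_def,
    (plateauBump n).zero_of_le_dist (by simpa [plateauBump] using hx), zero_div]

lemma plateau_eq_inv_integral {x : En n} (hx : ‖x‖ ≤ 1 / 2) :
    plateau n x = (∫ y, plateauBump n y)⁻¹ := by
  rw [plateau, ContDiffBump.normed_def,
    (plateauBump n).one_of_mem_closedBall (by simpa [plateauBump] using hx), one_div]

lemma plateau_eq_plateau_zero {x : En n} (hx : ‖x‖ ≤ 1 / 2) : plateau n x = plateau n 0 := by
  rw [plateau_eq_inv_integral hx, plateau_eq_inv_integral (by simp)]

lemma plateau_zero_pos (n : ℕ) : 0 < plateau n 0 := by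
  rw [plateau_eq_inv_integral (by simp)]
  exact inv_pos.2 (plateauBump n).integral_pos

lemma abs_plateau_le (x : En n) : |plateau n x| ≤ plateau n 0 := by
  rw [plateau_eq_inv_integral (x := 0) (by simp), plateau,
    abs_of_nonneg (ContDiffBump.nonneg_normed _ x), ContDiffBump.normed_def, div_eq_mul_inv]
  exact mul_le_of_le_one_left (inv_pos.2 (plateauBump n).integral_pos).le (plateauBump n).le_one

lemma isTestFun_plateau (n : ℕ) : IsTestFun n (plateau n) := by
  refine ⟨(plateauBump n).contDiff_normed, fun x hx => plateau_eq_zero ?_,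
    (plateauBump n).integral_normed⟩
  exact (not_le.1 (mem_closedBall_zero_iff.not.1 hx)).le

lemma continuous_plateau (n : ℕ) : Continuous (plateau n) := (plateauBump n).continuous_normed

end Plateau

section AnnulusProfile

/-- The contribution of a unit mass near `z` to the lower bound for the maximal function: at `x`
with `R < ‖x‖ ≤ ‖z‖ / 6` it is the maximum of the dilate of `plateau` at scale `4 * ‖x‖`. -/
def annulusProfile {n : ℕ} (R : ℝ) (z : En n) : En n → ℝ :=
  (closedBall 0 (‖z‖ / 6) \ closedBall 0 R).indicator fun x => ((4 * ‖x‖) ^ n)⁻¹ * plateau n 0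

variable {n : ℕ} {R : ℝ}

lemma annulusProfile_nonneg (R : ℝ) (z x : En n) : 0 ≤ annulusProfile R z x :=
  indicator_nonneg (fun x _ => by have := plateau_zero_pos n; positivity) x

lemma annulusProfile_eq_zero {x : En n} (z : En n) (hx : ‖x‖ ≤ R) : annulusProfile R z x = 0 :=
  indicator_of_notMem (fun h => h.2 (mem_closedBall_zero_iff.2 hx)) _

lemma annulusProfile_eq_mul_indicator (R : ℝ) (z x : En n) :
    annulusProfile R z x = (4 ^ n)⁻¹ * plateau n 0 *
      (closedBall 0 (‖z‖ / 6) \ closedBall 0 R).indicator (fun x => (‖x‖ ^ n)⁻¹) x := by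
  rw [annulusProfile, ← indicator_const_mul]
  congr 1 with x
  ring

lemma integrable_annulusProfile (hR : 0 < R) (z : En n) : Integrable (annulusProfile R z) := by
  simp only [funext (annulusProfile_eq_mul_indicator R z)]
  exact ((integrableOn_inv_norm_pow_annulus volume hR _ n).integrable_indicator
    (measurableSet_closedBall.diff measurableSet_closedBall)).const_mul _

lemma integral_annulusProfile [NeZero n] (hR : 0 < R) (z : En n) :
    ∫ x, annulusProfile R z x =
      (4 ^ n)⁻¹ * plateau n 0 * (n * volume.real (ball (0 : En n) 1)) * log⁺ (‖z‖ / 6 / R) := by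
  simp only [annulusProfile_eq_mul_indicator]
  rw [integral_const_mul,
    integral_indicator (measurableSet_closedBall.diff measurableSet_closedBall),
    mul_assoc _ (_ * _)]
  congr 1
  simpa using setIntegral_inv_norm_pow_finrank_annulus (E := En n) volume hR (b := ‖z‖ / 6)
    (by positivity)

end AnnulusProfile

/-- `f` has integral `1` and vanishes outside the closed ball of radius `R` around `z`: the common
features of the indicators `χ_{Q_j}` and of `θ`. -/
structure IsUnitMassIn {n : ℕ} (f : En n → ℝ) (z : En n) (R : ℝ) : Prop where
  integral_eq_one : ∫ y, f y = 1
  support_subset : Function.support f ⊆ closedBall z R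

namespace IsUnitMassIn

variable {n : ℕ} {f θ : En n → ℝ} {x z : En n} {R : ℝ}

lemma integrable (hf : IsUnitMassIn f z R) : Integrable f :=
  integrable_of_integral_eq_one hf.integral_eq_one

lemma radius_pos [NeZero n] (hf : IsUnitMassIn f z R) : 0 < R := by
  by_contra! hR
  have hnull : volume (closedBall z R) = 0 := (subsingleton_closedBall z hR).measure_zero volume
  refine zero_ne_one (α := ℝ) ?_
  rw [← hf.integral_eq_one, ← setIntegral_measure_zero f hnull]
  exact setIntegral_eq_integral_of_forall_compl_eq_zero fun y hy =>
    Function.notMem_support.1 fun hy' => hy (hf.support_subset hy')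

lemma phiConv_plateau_le (hf : IsUnitMassIn f z R) (hf0 : 0 ≤ f) {t : ℝ} (ht : 0 ≤ t) :
    phiConv n (plateau n) f t x ≤ (t ^ n)⁻¹ * plateau n 0 := by
  simpa [hf.integral_eq_one] using
    phiConv_le (continuous_plateau n) abs_plateau_le hf.integrable hf0 ht

lemma phiConv_plateau_eq_of_lt (hθ : IsUnitMassIn θ 0 R) (hx : R < ‖x‖) :
    phiConv n (plateau n) θ (4 * ‖x‖) x = ((4 * ‖x‖) ^ n)⁻¹ * plateau n 0 := by
  rw [phiConv_eq_mul_integral (c := plateau n 0), hθ.integral_eq_one, mul_one]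
  intro y hy
  have hyR : ‖y‖ ≤ R := mem_closedBall_zero_iff.1 (hθ.support_subset hy)
  have hx0 : 0 < ‖x‖ := (norm_nonneg y).trans_lt (hyR.trans_lt hx)
  apply plateau_eq_plateau_zero
  rw [norm_smul, norm_inv, norm_of_nonneg (by positivity), ← div_eq_inv_mul,
    div_le_iff₀ (by positivity)]
  linarith [norm_sub_le x y]

lemma phiConv_plateau_eq_zero (hf : IsUnitMassIn f z R) (hx : R < ‖x‖) (hz : 6 * ‖x‖ ≤ ‖z‖) :
    phiConv n (plateau n) f (4 * ‖x‖) x = 0 := by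
  rw [phiConv_eq_mul_integral (c := 0), mul_zero, zero_mul]
  intro y hy
  have hyz : ‖y - z‖ ≤ R := mem_closedBall_iff_norm.1 (hf.support_subset hy)
  have hx0 : 0 < ‖x‖ := (norm_nonneg _).trans_lt (hyz.trans_lt hx)
  apply plateau_eq_zero
  rw [norm_smul, norm_inv, norm_of_nonneg (by positivity), ← div_eq_inv_mul,
    one_le_div (by positivity)]
  have htri : ‖z‖ ≤ ‖y - z‖ + ‖x - y‖ + ‖x‖ := by
    calc ‖z‖ = ‖x - (y - z) - (x - y)‖ := by congr 1; abel
      _ ≤ ‖y - z‖ + ‖x - y‖ + ‖x‖ := by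
        linarith [norm_sub_le (x - (y - z)) (x - y), norm_sub_le x (y - z)]
  linarith

/- Since `plateau` attains its maximum on the support of `θ`, the difference cannot be positive, and
the masses far from `x` are not seen at scale `4 * ‖x‖` at all. -/
lemma annulusProfile_le_neg_phiConv_sub (hf : IsUnitMassIn f z R) (hf0 : 0 ≤ f)
    (hθ : IsUnitMassIn θ 0 R) (hx : R < ‖x‖) :
    annulusProfile R z x ≤ -phiConv n (plateau n) (fun y => f y - θ y) (4 * ‖x‖) x := by
  rw [phiConv_sub (continuous_plateau n) abs_plateau_le hf.integrable hθ.integrable,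
    hθ.phiConv_plateau_eq_of_lt hx, neg_sub]
  refine indicator_apply_le' (fun hmem => ?_) fun _ => ?_
  · have hxz : ‖x‖ ≤ ‖z‖ / 6 := mem_closedBall_zero_iff.1 hmem.1
    rw [hf.phiConv_plateau_eq_zero hx (by linarith), sub_zero]
  · exact sub_nonneg.2 (hf.phiConv_plateau_le hf0 (by positivity))

end IsUnitMassIn

section LatticePart

variable {n : ℕ} {ι : Type*} {θ : En n → ℝ} {f : ι → En n → ℝ} {z : ι → En n}
  {lam : ι → ℝ} {R : ℝ}

lemma summable_integral_norm_mul_sub (hθ : Integrable θ) (hf : ∀ i, IsUnitMassIn (f i) (z i) R)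
    (hf0 : ∀ i, 0 ≤ f i) (hlam : ∀ i, 0 ≤ lam i) (hsum : Summable lam) :
    Summable fun i => ∫ y, ‖lam i * (f i y - θ y)‖ := by
  refine (hsum.mul_right (1 + ∫ y, ‖θ y‖)).of_nonneg_of_le
    (fun i => integral_nonneg fun y => norm_nonneg _) fun i => ?_
  simp only [norm_mul, norm_of_nonneg (hlam i), integral_const_mul]
  gcongr
  · exact hlam i
  rw [← (hf i).integral_eq_one, ← integral_add (hf i).integrable hθ.norm]
  refine integral_mono ((hf i).integrable.sub hθ).norm ((hf i).integrable.add hθ.norm) fun y => ?_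
  simpa [abs_of_nonneg (hf0 i y)] using norm_sub_le (f i y) (θ y)

lemma ae_sum_mul_annulusProfile_le_Mphi [NeZero n] [Countable ι] (hθ : IsUnitMassIn θ 0 R)
    (hf : ∀ i, IsUnitMassIn (f i) (z i) R) (hf0 : ∀ i, 0 ≤ f i) (hlam : ∀ i, 0 ≤ lam i)
    (hsum : Summable lam) (s : Finset ι) :
    ∀ᵐ x, ∑ i ∈ s, lam i * annulusProfile R (z i) x ≤
      Mphi n (plateau n) (fun x => ∑' i, lam i * (f i x - θ x)) x := by
  have hu (i : ι) : Integrable fun y => lam i * (f i y - θ y) :=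
    ((hf i).integrable.sub hθ.integrable).const_mul _
  have hnorm := summable_integral_norm_mul_sub hθ.integrable hf hf0 hlam hsum
  filter_upwards [(isTestFun_plateau n).ae_abs_phiConv_le_Mphi
    (integrable_tsum_of_summable_integral_norm hu hnorm)] with x hM
  rcases le_or_gt ‖x‖ R with hxR | hRx
  · refine (Finset.sum_eq_zero fun i _ => ?_).trans_le (Mphi_nonneg _ _ x)
    rw [annulusProfile_eq_zero _ hxR, mul_zero]
  have hx0 : 0 < ‖x‖ := hθ.radius_pos.trans hRx
  have hterm (i : ι) : annulusProfile R (z i) x ≤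
      -phiConv n (plateau n) (fun y => f i y - θ y) (4 * ‖x‖) x :=
    (hf i).annulusProfile_le_neg_phiConv_sub (hf0 i) hθ hRx
  have hconv := (hasSum_phiConv (continuous_plateau n) abs_plateau_le hu hnorm
    (t := 4 * ‖x‖) (x := x)).neg
  simp only [phiConv_const_mul, ← mul_neg] at hconv
  calc _ ≤ ∑ i ∈ s, lam i * -phiConv n (plateau n) (fun y => f i y - θ y) (4 * ‖x‖) x :=
        Finset.sum_le_sum fun i _ => mul_le_mul_of_nonneg_left (hterm i) (hlam i)
    _ ≤ -phiConv n (plateau n) (fun y => ∑' i, lam i * (f i y - θ y)) (4 * ‖x‖) x :=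
        sum_le_hasSum s (fun i _ => mul_nonneg (hlam i) <|
          (annulusProfile_nonneg R (z i) x).trans (hterm i)) hconv
    _ ≤ _ := (neg_le_abs _).trans (hM _ (by positivity))

lemma summable_mul_integral_annulusProfile [NeZero n] [Countable ι] (hθ : IsUnitMassIn θ 0 R)
    (hf : ∀ i, IsUnitMassIn (f i) (z i) R) (hf0 : ∀ i, 0 ≤ f i) (hlam : ∀ i, 0 ≤ lam i)
    (hsum : Summable lam)
    (hM : Integrable (Mphi n (plateau n) fun x => ∑' i, lam i * (f i x - θ x))) :
    Summable fun i => lam i * ∫ x, annulusProfile R (z i) x := by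
  refine summable_of_sum_le (c := ∫ x, Mphi n (plateau n) (fun x => ∑' i, lam i * (f i x - θ x)) x)
    (fun i => mul_nonneg (hlam i) <| integral_nonneg (annulusProfile_nonneg R (z i))) fun s => ?_
  have hint (i : ι) : Integrable fun x => lam i * annulusProfile R (z i) x :=
    (integrable_annulusProfile hθ.radius_pos (z i)).const_mul _
  simp only [← integral_const_mul]
  rw [← integral_finsetSum s fun i _ => hint i]
  exact integral_mono_ae (integrable_finsetSum s fun i _ => hint i) hM
    (ae_sum_mul_annulusProfile_le_Mphi hθ hf hf0 hlam hsum s)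

lemma lnp_eq_posLog (t : ℝ) : lnp t = log⁺ t := max_comm _ _

theorem lattice_part_necessary_general [NeZero n] [Countable ι] (hθ : IsUnitMassIn θ 0 R)
    (hf : ∀ i, IsUnitMassIn (f i) (z i) R) (hf0 : ∀ i, 0 ≤ f i) (hlam : ∀ i, 0 ≤ lam i)
    (hsum : Summable lam) (hH1 : MemH1 n fun x => ∑' i, lam i * (f i x - θ x)) :
    Summable fun i => lam i * (1 + lnp ‖z i‖) := by
  have hR : 0 < R := hθ.radius_pos
  have hprofile := summable_mul_integral_annulusProfile hθ hf hf0 hlam hsum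
    (hH1 _ (isTestFun_plateau n))
  have hlog : Summable fun i => lam i * log⁺ (‖z i‖ / 6 / R) := by
    have hn : (n : ℝ) ≠ 0 := NeZero.ne _
    have hV : volume.real (ball (0 : En n) 1) ≠ 0 :=
      (ENNReal.toReal_pos (measure_ball_pos _ _ one_pos).ne' measure_ball_lt_top.ne).ne'
    simp only [integral_annulusProfile hR, mul_left_comm (lam _)] at hprofile
    exact (summable_mul_left_iff (by have := (plateau_zero_pos n).ne'; positivity)).1 hprofile
  refine ((hsum.mul_right (1 + log⁺ (6 * R))).add hlog).of_nonneg_of_le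
    (fun i => mul_nonneg (hlam i) (add_nonneg zero_le_one (le_max_right _ _))) fun i => ?_
  rw [← mul_add, lnp_eq_posLog, add_assoc]
  gcongr
  · exact hlam i
  calc log⁺ ‖z i‖ = log⁺ (6 * R * (‖z i‖ / 6 / R)) := by congr 1; field_simp
    _ ≤ log⁺ (6 * R) + log⁺ (‖z i‖ / 6 / R) := posLog_mul

end LatticePart

section UnitCubes

variable {n : ℕ}

lemma Qk_subset_closedBall (k : Fin n → ℤ) : Qk n k ⊆ closedBall (zv n k) √n := by
  intro x hx
  have hcoord (i : Fin n) : dist (x i) (zv n k i) ≤ 1 := by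
    have hzv : zv n k i = k i := rfl
    rw [hzv, Real.dist_eq, abs_le]
    constructor <;> linarith [(hx i).1, (hx i).2]
  rw [mem_closedBall, EuclideanSpace.dist_eq]
  gcongr
  calc ∑ i, dist (x i) (zv n k i) ^ 2 ≤ ∑ _i : Fin n, (1 : ℝ) :=
        Finset.sum_le_sum fun i _ => pow_le_one₀ dist_nonneg (hcoord i)
    _ = n := by simp

lemma measurableSet_Qk (k : Fin n → ℤ) : MeasurableSet (Qk n k) := by
  simp only [Qk, Set.ofPred_forall]
  measurability

lemma volume_Qk (k : Fin n → ℤ) : volume (Qk n k) = 1 := by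
  have hpi : Qk n k = WithLp.ofLp ⁻¹'
      (univ.pi fun i => Ioo ((k i : ℝ) - 1 / 2) ((k i : ℝ) + 1 / 2)) := by
    ext x
    simp [Qk]
  rw [hpi, (PiLp.volume_preserving_ofLp (Fin n)).measure_preimage
    (MeasurableSet.univ_pi fun i => measurableSet_Ioo).nullMeasurableSet, Real.volume_pi_Ioo]
  refine Finset.prod_eq_one fun i _ => ?_
  rw [ENNReal.ofReal_eq_one]
  ring

lemma isUnitMassIn_indicator_Qk (k : Fin n → ℤ) :
    IsUnitMassIn ((Qk n k).indicator 1) (zv n k) √n where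
  integral_eq_one := by
    rw [integral_indicator_one (measurableSet_Qk k), Measure.real, volume_Qk, toReal_one]
  support_subset := support_indicator_subset.trans (Qk_subset_closedBall k)

lemma unitQ_eq_Qk_zero (n : ℕ) : unitQ n = Qk n 0 := by
  ext x
  simp [unitQ, Qk]

lemma isUnitMassIn_of_forall_notMem_unitQ {θ : En n → ℝ} (hθ : ∀ x ∉ unitQ n, θ x = 0)
    (hint : ∫ x, θ x = 1) : IsUnitMassIn θ 0 √n where
  integral_eq_one := hint
  support_subset := by
    have hzv : zv n 0 = 0 := by ext i; simp [zv]
    rw [← hzv]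
    refine (Function.support_subset_iff'.2 hθ).trans ?_
    rw [unitQ_eq_Qk_zero]
    exact Qk_subset_closedBall 0

end UnitCubes

/-- **Proposition (necessity for the lattice part).**
If the `λ_j` are nonnegative with `∑_j λ_j < ∞` and
`g = ∑_j λ_j (χ_{Q_j} - θ)` belongs to `H^1(ℝ^n)`, then
`∑_j λ_j (1 + ln₊|j|) < ∞`. -/
theorem lattice_part_necessary (n : ℕ) (hn : 1 ≤ n) (θ : En n → ℝ)
    (hθmeas : Measurable θ) (hθbdd : ∃ C, ∀ x, |θ x| ≤ C)
    (hθsupp : ∀ x, x ∉ unitQ n → θ x = 0) (hθint : (∫ x, θ x) = 1)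
    (lam : (Fin n → ℤ) → ℝ) (hpos : ∀ j, 0 ≤ lam j)
    (hsum : Summable lam)
    (hH1 : MemH1 n (fun x => ∑' j : Fin n → ℤ,
      lam j * ((Qk n j).indicator (1 : En n → ℝ) x - θ x))) :
    Summable (fun j => lam j * (1 + lnp ‖zv n j‖)) := by
  have : NeZero n := ⟨by omega⟩
  exact lattice_part_necessary_general (isUnitMassIn_of_forall_notMem_unitQ hθsupp hθint)
    isUnitMassIn_indicator_Qk (fun j => indicator_nonneg fun _ _ => zero_le_one) hpos hsum hH1
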